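/- In the valuative tree setting: let k ≥ 1, let v₁,…,v_k be the curve valuations of distinct irreducible f₁,…,f_k ∈ 𝔪 ⊂ ℂ[[x,y]], let b₁,…,b_k ∈ ℚ with Bⱼ := bⱼ/m(fⱼ) ≥ 1, B̃ := max Bⱼ, I₁ := {j : Bⱼ = B̃}, I₂ := {j : Bⱼ < B̃}. If a normalized valuation v satisfies v(fⱼ) = bⱼ for all j, then (i) α(⋀_{i∈I₁} v_i) ≥ B̃, and (ii) α(v_i ⋀ v_j) = Bⱼ for all i ∈ I₁, j ∈ I₂. [Necessity direction of the 2-dimensional interpolation criterion.] -/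

import Mathlib

open scoped Classical

/-- Necessity direction of the 2-dimensional valuative interpolation criterion, in the
abstract valuative-tree setting: if a normalized valuation v satisfies
v(fⱼ) = bⱼ (encoded via the Favre–Jonsson identity v(fⱼ) = α(v ⋀ vⱼ)·m(fⱼ)), then
(i) α(⋀_{i∈I₁} vᵢ) ≥ B̃, and (ii) α(vᵢ ⋀ vⱼ) = Bⱼ for i ∈ I₁, j ∈ I₂. -/
theorem stmt_15 {V : Type*} [SemilatticeInf V] (k : ℕ) (hk : 0 < k)
    (α : V → ENNReal) (hα : StrictMono α)
    (htree : ∀ a b c : V, a ≤ c → b ≤ c → a ≤ b ∨ b ≤ a)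
    (cv : Fin k → V) (m b B : Fin k → ENNReal) (Btil : ENNReal)
    (hm : ∀ j, m j ≠ 0 ∧ m j ≠ ⊤)
    (hB1 : ∀ j, 1 ≤ B j) (hBfin : ∀ j, B j ≠ ⊤)
    (hb : ∀ j, b j = B j * m j)
    (hBtil : IsGreatest (Set.range B) Btil)
    (I1 I2 : Finset (Fin k))
    (hI1 : I1 = Finset.univ.filter fun j => B j = Btil)
    (hI2 : I2 = Finset.univ.filter fun j => B j < Btil)
    (hI1ne : I1.Nonempty)
    (v : V) (hv : ∀ j, α (v ⊓ cv j) * m j = b j) :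
    Btil ≤ α (I1.inf' hI1ne cv) ∧
    ∀ i ∈ I1, ∀ j ∈ I2, α (cv i ⊓ cv j) = B j := by
  have hBv : ∀ j, α (v ⊓ cv j) = B j := fun j =>
    (ENNReal.mul_left_inj (hm j).1 (hm j).2).1 ((hv j).trans (hb j))
  -- among the elements below `v`, the skewness determines the order
  have hle : ∀ i j, B i ≤ B j → v ⊓ cv i ≤ v ⊓ cv j := by
    intro i j hij
    rcases htree (v ⊓ cv i) (v ⊓ cv j) v inf_le_left inf_le_left with h | h
    · exact h
    · rcases h.eq_or_lt with h | h
      · exact h.ge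
      · have := hα h
        rw [hBv, hBv] at this
        exact absurd this (not_lt.2 hij)
  subst hI1 hI2
  constructor
  · obtain ⟨i, hi⟩ := id hI1ne
    have hi' : B i = Btil := by simpa using hi
    refine (hi'.symm.trans (hBv i).symm).le.trans ?_
    apply hα.monotone
    apply Finset.le_inf'
    intro j hj
    have hj' : B j = Btil := by simpa using hj
    exact (hle i j (hi'.trans hj'.symm).le).trans inf_le_right
  · intro i hi j hj
    have hi' : B i = Btil := by simpa using hi
    have hj' : B j < Btil := by simpa using hj
    rw [← hi'] at hj'
    have h1 : v ⊓ cv j ≤ cv i ⊓ cv j :=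
      le_inf ((hle j i hj'.le).trans inf_le_right) inf_le_right
    have h2 : cv i ⊓ cv j ≤ v ⊓ cv j := by
      rcases htree (cv i ⊓ cv j) (v ⊓ cv i) (cv i) inf_le_left inf_le_right with h | h
      · exact le_inf (h.trans inf_le_left) inf_le_right
      · have h3 : v ⊓ cv i ≤ v ⊓ cv j := le_inf inf_le_left (h.trans inf_le_right)
        have := hα.monotone h3
        rw [hBv, hBv] at this
        exact absurd hj' (not_lt.2 this)
    rw [← hBv j, le_antisymm h1 h2]
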